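/- arXiv:2311.01317 — 4 statements merged into one kernel-verified Lean document; each statement's English description precedes it below -/
import Mathlib

section
/- Let τ ≥ 1 and n = 2^τ, and let W^(l) ∈ ℝ^{n×n} be the one-peer exponential weight matrices. If l₀, …, l_{τ−1} ∈ ℕ are indices such that {l₀ mod τ, …, l_{τ−1} mod τ} = {0, 1, …, τ−1}, then W^(l_{τ−1}) W^(l_{τ−2}) ⋯ W^(l₁) W^(l₀) = (1/n)·11ᵀ, where 1 ∈ ℝⁿ is the all-ones vector. In particular, the matrices W^(0), …, W^(τ−1) have the finite-time consensus property. -/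
open Matrix

/-- `Jmat n = (1/n) · 11ᵀ`, the exact-averaging matrix. -/
noncomputable def Jmat (n : ℕ) : Matrix (Fin n) (Fin n) ℝ :=
  Matrix.of fun _ _ => (n : ℝ)⁻¹

/-- Ordered product `mprod W k = W^(k-1) ⋯ W^(1) W^(0)` (empty product is the identity). -/
noncomputable def mprod {n : ℕ} (W : ℕ → Matrix (Fin n) (Fin n) ℝ) :
    ℕ → Matrix (Fin n) (Fin n) ℝ
  | 0 => 1
  | k + 1 => W k * mprod W k

/-- The one-peer exponential weight matrix `W^(l)` on `n` nodes (indices `0, …, n-1`):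
`W^(l)_{ij} = 1/2` if `(j - i) mod n = 2^(l mod τ)`, `1/2` if `i = j`, and `0` otherwise. -/
noncomputable def expW (n τ l : ℕ) : Matrix (Fin n) (Fin n) ℝ :=
  Matrix.of fun i j =>
    if ((j : ℤ) - (i : ℤ)) % (n : ℤ) = 2 ^ (l % τ) then 1 / 2
    else if i = j then 1 / 2
    else 0

/-!
Let `S` be the cyclic shift. For `n = 2 ^ τ` every `W^(l)` equals `(1 + S ^ 2 ^ (l mod τ)) / 2`, a
polynomial in `S`, so the factors commute and their order is immaterial. Expanding
`∏_{k < τ} (1 + S ^ 2 ^ k)` gives `∑_{m < n} S ^ m`, each `m < 2 ^ τ` arising once from its binary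
expansion, and the powers of the cyclic shift sum to the all-ones matrix.
-/

open Polynomial

theorem prod_one_add_pow_two_pow {R : Type*} [CommSemiring R] (x : R) (k : ℕ) :
    ∏ i ∈ Finset.range k, (1 + x ^ 2 ^ i) = ∑ m ∈ Finset.range (2 ^ k), x ^ m := by
  induction k with
  | zero => simp
  | succ k ih =>
    calc ∏ i ∈ Finset.range (k + 1), (1 + x ^ 2 ^ i)
        = (∑ m ∈ Finset.range (2 ^ k), x ^ m) * (1 + x ^ 2 ^ k) := by
          rw [Finset.prod_range_succ, ih]
      _ = ∑ m ∈ Finset.range (2 ^ k), x ^ m + ∑ m ∈ Finset.range (2 ^ k), x ^ (2 ^ k + m) := by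
          simp only [pow_add, ← Finset.mul_sum]
          ring
      _ = ∑ m ∈ Finset.range (2 ^ (k + 1)), x ^ m := by
          rw [← Finset.sum_range_add, pow_succ, mul_two]

theorem prod_comp_eq_prod_of_image_eq_self {ι M : Type*} [DecidableEq ι] [CommMonoid M]
    {s : Finset ι} {g : ι → ι} (hg : s.image g = s) (f : ι → M) :
    ∏ i ∈ s, f (g i) = ∏ i ∈ s, f i := by
  have hinj : Set.InjOn g s := Finset.injOn_of_card_image_eq (by rw [hg])
  rw [← Finset.prod_image hinj, hg]

theorem mprod_aeval {n : ℕ} (A : Matrix (Fin n) (Fin n) ℝ) (p : ℕ → ℝ[X]) (k : ℕ) :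
    mprod (fun i => aeval A (p i)) k = aeval A (∏ i ∈ Finset.range k, p i) := by
  induction k with
  | zero => simp [mprod]
  | succ k ih => rw [mprod, ih, ← map_mul, Finset.prod_range_succ_comm]

theorem natCast_sub_emod_eq_val_sub {n : ℕ} (i j : Fin n) :
    ((j : ℤ) - (i : ℤ)) % (n : ℤ) = ((j - i : Fin n) : ℤ) := by
  calc ((j : ℤ) - i) % n = ((n : ℤ) - i + j) % n := by
        rw [sub_add_eq_add_sub, add_sub_assoc, Int.add_emod_left]
    _ = ((j - i : Fin n) : ℤ) := by
        rw [Fin.val_sub]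
        push_cast [i.is_le']
        rfl

theorem finRotate_pow_apply {n : ℕ} (k i : Fin n) : (finRotate n ^ (k : ℕ)) i = i + k := by
  rw [Equiv.Perm.coe_pow, ← finCycle_eq_finRotate_iterate, finCycle_apply]

theorem permMatrix_pow {ι R : Type*} [Fintype ι] [DecidableEq ι] [Semiring R]
    (σ : Equiv.Perm ι) (m : ℕ) : (σ ^ m).permMatrix R = σ.permMatrix R ^ m := by
  induction m with
  | zero => simp
  | succ m ih => rw [pow_succ, pow_succ', Matrix.permMatrix_mul, ih]

section CyclicShift

variable (R : Type*) [Semiring R]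

/-- The matrix of the cyclic shift `i ↦ i + 1` on `Fin n`, with a one at each entry `(i, i + 1)`;
the weight matrices are polynomials in it. -/
def cyclicShift (n : ℕ) : Matrix (Fin n) (Fin n) R :=
  (finRotate n).permMatrix R

theorem cyclicShift_pow_apply {n : ℕ} (k i j : Fin n) :
    (cyclicShift R n ^ (k : ℕ)) i j = if j - i = k then 1 else 0 := by
  have : NeZero n := i.neZero
  simp only [cyclicShift, ← permMatrix_pow, PEquiv.toMatrix_apply, Equiv.toPEquiv_apply,
    finRotate_pow_apply, Option.mem_some_iff, sub_eq_iff_eq_add', eq_comm (a := i + k)]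

theorem sum_cyclicShift_pow (n : ℕ) :
    ∑ m ∈ Finset.range n, cyclicShift R n ^ m = Matrix.of fun _ _ => 1 := by
  ext i j
  simp [Finset.sum_range, Matrix.sum_apply, cyclicShift_pow_apply]

end CyclicShift

/-- The polynomial `(1 + X ^ 2 ^ k) / 2`, whose value at the cyclic shift is the one-peer
exponential weight matrix with peers at distance `2 ^ k`. -/
noncomputable def onePeerPoly (k : ℕ) : ℝ[X] :=
  C (1 / 2) * (1 + X ^ 2 ^ k)

theorem prod_onePeerPoly (τ : ℕ) :
    ∏ k ∈ Finset.range τ, onePeerPoly k =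
      C ((2 ^ τ : ℝ)⁻¹) * ∑ m ∈ Finset.range (2 ^ τ), X ^ m := by
  simp only [onePeerPoly, Finset.prod_mul_distrib, prod_one_add_pow_two_pow, Finset.prod_const,
    Finset.card_range, ← C_pow, one_div, inv_pow]

theorem expW_eq_aeval_cyclicShift {n τ l : ℕ} (h : 2 ^ (l % τ) < n) :
    expW n τ l = aeval (cyclicShift ℝ n) (onePeerPoly (l % τ)) := by
  ext i j
  have hpow := cyclicShift_pow_apply ℝ ⟨2 ^ (l % τ), h⟩ i j
  have hcond : ((j : ℤ) - (i : ℤ)) % (n : ℤ) = 2 ^ (l % τ) ↔ j - i = ⟨2 ^ (l % τ), h⟩ := by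
    rw [natCast_sub_emod_eq_val_sub, Fin.ext_iff]
    norm_cast
  have hself (hij : i = j) : j - i ≠ ⟨2 ^ (l % τ), h⟩ := by
    have : NeZero n := i.neZero
    simp [hij, Fin.ext_iff, eq_comm]
  simp only [expW, Matrix.of_apply, hcond, onePeerPoly, map_mul, aeval_C, ← Algebra.smul_def,
    map_add, map_one, map_pow, aeval_X, Matrix.smul_apply, Matrix.add_apply, Matrix.one_apply, hpow]
  split_ifs <;> simp_all

theorem aeval_cyclicShift_prod_onePeerPoly (τ : ℕ) :
    aeval (cyclicShift ℝ (2 ^ τ)) (∏ k ∈ Finset.range τ, onePeerPoly k) = Jmat (2 ^ τ) := by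
  ext i j
  simp [prod_onePeerPoly, sum_cyclicShift_pow, Jmat, ← Algebra.smul_def]

theorem mprod_expW_eq_Jmat {τ : ℕ} (hτ : 1 ≤ τ) {l : ℕ → ℕ}
    (hl : Finset.image (fun i => l i % τ) (Finset.range τ) = Finset.range τ) :
    mprod (fun i => expW (2 ^ τ) τ (l i)) τ = Jmat (2 ^ τ) := by
  have hdist (i : ℕ) : 2 ^ (l i % τ) < 2 ^ τ :=
    Nat.pow_lt_pow_right one_lt_two (Nat.mod_lt _ hτ)
  simp only [expW_eq_aeval_cyclicShift (hdist _)]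
  rw [mprod_aeval, prod_comp_eq_prod_of_image_eq_self hl, aeval_cyclicShift_prod_onePeerPoly]

theorem stmt2 (τ : ℕ) (hτ : 1 ≤ τ) (n : ℕ) (hn : n = 2 ^ τ)
    (l : ℕ → ℕ)
    (hl : Finset.image (fun i => l i % τ) (Finset.range τ) = Finset.range τ) :
    mprod (fun i => expW n τ (l i)) τ = Jmat n ∧
    mprod (expW n τ) τ = Jmat n := by
  subst hn
  have hid : Finset.image (fun i => i % τ) (Finset.range τ) = Finset.range τ := by
    simpa using Nat.image_Ico_mod 0 τ
  exact ⟨mprod_expW_eq_Jmat hτ hl, mprod_expW_eq_Jmat hτ hid⟩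
end

section
/- Let τ ≥ 1, let p₀, …, p_{τ−1} ≥ 2 be prime numbers with n = p_{τ−1}⋯p₁p₀, and let W^(l) ∈ ℝ^{n×n} be the p-peer hyper-cuboid weight matrices. Then each W^(l) is symmetric and doubly stochastic, and for any index sequence l₀, …, l_{τ−1} ∈ ℕ with {l₀ mod τ, …, l_{τ−1} mod τ} = {0, …, τ−1}, one has W^(l_{τ−1}) ⋯ W^(l₁) W^(l₀) = (1/n)·11ᵀ; i.e., the matrices have the finite-time consensus property. -/
open Matrix

/-- A real square matrix is doubly stochastic if its entries are nonnegative and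
every row sum and every column sum equals `1`. -/
def DoublyStochastic {n : ℕ} (W : Matrix (Fin n) (Fin n) ℝ) : Prop :=
  (∀ i j, 0 ≤ W i j) ∧ (∀ i, ∑ j, W i j = 1) ∧ (∀ j, ∑ i, W i j = 1)

/-- The `r`-th mixed-radix digit (base `(…, p 2, p 1, p 0)`) of the natural number `i`. -/
def digit (p : ℕ → ℕ) (r i : ℕ) : ℕ := (i / ∏ s ∈ Finset.range r, p s) % p r

open scoped Classical in
/-- The `p`-peer hyper-cuboid weight matrix `W^(l)` on `n = p_{τ-1} ⋯ p_1 p_0` nodes: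
`W^(l)_{ij} = 1/p_{l mod τ}` if the mixed-radix digits of `i` and `j` agree in every
position `r ≠ l mod τ`, and `0` otherwise. -/
noncomputable def cuboidW (p : ℕ → ℕ) (τ n l : ℕ) : Matrix (Fin n) (Fin n) ℝ :=
  Matrix.of fun i j =>
    if ∀ r < τ, r ≠ l % τ → digit p r (i : ℕ) = digit p r (j : ℕ) then
      (p (l % τ) : ℝ)⁻¹
    else 0

/-!
Writing a node as its tuple of mixed-radix digits identifies `W^(l)` with the Kronecker product
`I ⊗ ⋯ ⊗ J ⊗ ⋯ ⊗ I` whose only nontrivial factor, the averaging matrix `J`, sits at position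
`l mod τ`. Kronecker products multiply factor by factor, and `J` absorbs every doubly stochastic
matrix, so once every position has been visited the product is `J ⊗ ⋯ ⊗ J`, which is the averaging
matrix on all `n` nodes.
-/

section PiKronecker

variable {ι R : Type*} {α β γ : ι → Type*} [Fintype ι] [CommSemiring R]

/-- The Kronecker product of a finite family of matrices, indexed by tuples of row and column
indices; the binary case is `Matrix.kronecker`. -/
def piKronecker (M : ∀ r, Matrix (α r) (β r) R) : Matrix (∀ r, α r) (∀ r, β r) R :=
  Matrix.of fun x y => ∏ r, M r (x r) (y r)

theorem piKronecker_apply (M : ∀ r, Matrix (α r) (β r) R) (x : ∀ r, α r) (y : ∀ r, β r) :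
    piKronecker M x y = ∏ r, M r (x r) (y r) :=
  rfl

theorem piKronecker_transpose (M : ∀ r, Matrix (α r) (β r) R) :
    (piKronecker M)ᵀ = piKronecker fun r => (M r)ᵀ :=
  rfl

theorem piKronecker_one [∀ r, DecidableEq (α r)] :
    piKronecker (1 : ∀ r, Matrix (α r) (α r) R) = 1 := by
  ext x y
  simp only [piKronecker_apply, Pi.one_apply, Matrix.one_apply, Fintype.prod_ite_zero,
    Finset.prod_const_one, funext_iff]

variable [DecidableEq ι]

theorem piKronecker_mul [∀ r, Fintype (β r)] (M : ∀ r, Matrix (α r) (β r) R)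
    (N : ∀ r, Matrix (β r) (γ r) R) :
    piKronecker M * piKronecker N = piKronecker fun r => M r * N r := by
  ext x y
  simp only [Matrix.mul_apply, piKronecker_apply, Fintype.prod_sum, Finset.prod_mul_distrib]

theorem sum_piKronecker_apply [∀ r, Fintype (β r)] (M : ∀ r, Matrix (α r) (β r) R)
    (x : ∀ r, α r) : ∑ y, piKronecker M x y = ∏ r, ∑ b, M r (x r) b := by
  simp only [piKronecker_apply, Fintype.prod_sum]

variable [∀ r, DecidableEq (α r)]

theorem piKronecker_mulSingle_apply (s : ι) (A : Matrix (α s) (α s) R) (x y : ∀ r, α r) :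
    piKronecker (Pi.mulSingle s A : ∀ r, Matrix (α r) (α r) R) x y =
      if ∀ r, r ≠ s → x r = y r then A (x s) (y s) else 0 := by
  have factor_of_ne : ∀ r ∈ ({s}ᶜ : Finset ι),
      (Pi.mulSingle s A : ∀ r, Matrix (α r) (α r) R) r (x r) (y r) =
        if x r = y r then 1 else 0 := by
    intro r hr
    rw [Pi.mulSingle_eq_of_ne (by simpa using hr), Matrix.one_apply]
  rw [piKronecker_apply, Fintype.prod_eq_mul_prod_compl s, Pi.mulSingle_eq_same,
    Finset.prod_congr rfl factor_of_ne, Finset.prod_ite_zero]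
  simp

theorem piKronecker_mem_doublyStochastic [∀ r, Fintype (α r)] [PartialOrder R] [IsOrderedRing R]
    {M : ∀ r, Matrix (α r) (α r) R} (hM : ∀ r, M r ∈ doublyStochastic R (α r)) :
    piKronecker M ∈ doublyStochastic R (∀ r, α r) := by
  refine mem_doublyStochastic_iff_sum.2 ⟨fun x y => ?nonneg, fun x => ?row, fun y => ?col⟩
  case nonneg =>
    exact Finset.prod_nonneg fun r _ => nonneg_of_mem_doublyStochastic (hM r)
  case row =>
    rw [sum_piKronecker_apply]
    exact Finset.prod_eq_one fun r _ => sum_row_of_mem_doublyStochastic (hM r) (x r)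
  case col =>
    change ∑ x, (piKronecker M)ᵀ y x = 1
    rw [piKronecker_transpose, sum_piKronecker_apply]
    exact Finset.prod_eq_one fun r _ => sum_col_of_mem_doublyStochastic (hM r) (y r)

end PiKronecker

section Averaging

variable {n : ℕ}

theorem doublyStochastic_iff_mem {W : Matrix (Fin n) (Fin n) ℝ} :
    DoublyStochastic W ↔ W ∈ doublyStochastic ℝ (Fin n) :=
  mem_doublyStochastic_iff_sum.symm

theorem Jmat_mem_doublyStochastic (n : ℕ) : Jmat n ∈ doublyStochastic ℝ (Fin n) := by
  have sum_eq_one (i : Fin n) : ∑ _j : Fin n, (n : ℝ)⁻¹ = 1 := by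
    have hn : (n : ℝ) ≠ 0 := Nat.cast_ne_zero.2 i.pos.ne'
    simp [hn]
  exact mem_doublyStochastic_iff_sum.2
    ⟨fun _ _ => inv_nonneg.2 n.cast_nonneg, sum_eq_one, sum_eq_one⟩

theorem mul_Jmat_of_mem_doublyStochastic {D : Matrix (Fin n) (Fin n) ℝ}
    (hD : D ∈ doublyStochastic ℝ (Fin n)) : D * Jmat n = Jmat n := by
  ext i j
  simp only [Matrix.mul_apply, Jmat, Matrix.of_apply, ← Finset.sum_mul,
    sum_row_of_mem_doublyStochastic hD, one_mul]

theorem Jmat_mul_of_mem_doublyStochastic {D : Matrix (Fin n) (Fin n) ℝ}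
    (hD : D ∈ doublyStochastic ℝ (Fin n)) : Jmat n * D = Jmat n := by
  ext i j
  simp only [Matrix.mul_apply, Jmat, Matrix.of_apply, ← Finset.mul_sum,
    sum_col_of_mem_doublyStochastic hD, mul_one]

theorem mprod_mem_of_forall_mem {S : Submonoid (Matrix (Fin n) (Fin n) ℝ)}
    {W : ℕ → Matrix (Fin n) (Fin n) ℝ} (hW : ∀ i, W i ∈ S) (k : ℕ) : mprod W k ∈ S := by
  induction k with
  | zero => exact S.one_mem
  | succ k ih => exact S.mul_mem (hW k) ih

theorem mprod_eq_Jmat_of_exists_eq_Jmat {W : ℕ → Matrix (Fin n) (Fin n) ℝ}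
    (hW : ∀ i, W i ∈ doublyStochastic ℝ (Fin n)) {k : ℕ} (hJ : ∃ i < k, W i = Jmat n) :
    mprod W k = Jmat n := by
  obtain ⟨i, hik, hi⟩ := hJ
  induction k, hik using Nat.le_induction with
  | base => rw [mprod, hi, Jmat_mul_of_mem_doublyStochastic (mprod_mem_of_forall_mem hW i)]
  | succ k _ ih => rw [mprod, ih, mul_Jmat_of_mem_doublyStochastic (hW k)]

theorem mulSingle_Jmat_mem_doublyStochastic {ι : Type*} [DecidableEq ι] (m : ι → ℕ) (s r : ι) :
    (Pi.mulSingle s (Jmat (m s)) : ∀ r, Matrix (Fin (m r)) (Fin (m r)) ℝ) r ∈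
      doublyStochastic ℝ (Fin (m r)) := by
  obtain rfl | hrs := eq_or_ne r s
  · rw [Pi.mulSingle_eq_same]
    exact Jmat_mem_doublyStochastic (m r)
  · rw [Pi.mulSingle_eq_of_ne hrs]
    exact one_mem _

variable {ι : Type*} [Fintype ι] {m : ι → ℕ} (e : (∀ r, Fin (m r)) ≃ Fin n)

theorem reindex_piKronecker_Jmat :
    reindex e e (piKronecker fun r => Jmat (m r)) = Jmat n := by
  classical
  have hcard : n = ∏ r, m r := by simpa using (Fintype.card_congr e).symm
  ext i j
  simp [piKronecker_apply, Jmat, hcard]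

theorem mprod_reindex_piKronecker (M : ℕ → ∀ r, Matrix (Fin (m r)) (Fin (m r)) ℝ) (k : ℕ) :
    mprod (fun i => reindex e e (piKronecker (M i))) k =
      reindex e e (piKronecker fun r => mprod (fun i => M i r) k) := by
  classical
  induction k with
  | zero =>
    change 1 = reindex e e (piKronecker 1)
    rw [piKronecker_one, reindex_apply, submatrix_one_equiv]
  | succ k ih =>
    simp only [mprod, ih]
    simp only [reindex_apply, submatrix_mul_equiv, piKronecker_mul]

end Averaging

section Cuboid

variable {p : ℕ → ℕ} {τ n : ℕ}

/-- The bijection taking a tuple of mixed-radix digits in base `(p (τ - 1), …, p 0)` to the node it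
represents. -/
def mixedRadixEquiv (hn : n = ∏ r ∈ Finset.range τ, p r) : (∀ r : Fin τ, Fin (p r)) ≃ Fin n :=
  finPiFinEquiv.trans (finCongr (hn.trans (Finset.prod_range p)).symm)

theorem mixedRadixEquiv_symm_apply (hn : n = ∏ r ∈ Finset.range τ, p r) (i : Fin n) (r : Fin τ) :
    ((mixedRadixEquiv hn).symm i r : ℕ) = digit p r i := by
  rw [digit, Finset.prod_range]
  rfl

theorem cuboidW_isSymm (p : ℕ → ℕ) (τ n l : ℕ) : (cuboidW p τ n l).IsSymm := by
  ext i j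
  simp only [cuboidW, transpose_apply, of_apply, eq_comm]

theorem cuboidW_eq_reindex_piKronecker (hn : n = ∏ r ∈ Finset.range τ, p r) {l : ℕ} {s : Fin τ}
    (hs : l % τ = s) :
    cuboidW p τ n l = reindex (mixedRadixEquiv hn) (mixedRadixEquiv hn)
      (piKronecker (Pi.mulSingle s (Jmat (p s)))) := by
  ext i j
  simp only [reindex_apply, submatrix_apply, piKronecker_mulSingle_apply, Fin.ext_iff,
    mixedRadixEquiv_symm_apply, cuboidW, of_apply, Jmat, hs, Fin.forall_iff, ne_eq]

theorem cuboidW_mem_doublyStochastic (hτ : 1 ≤ τ) (hn : n = ∏ r ∈ Finset.range τ, p r) (l : ℕ) :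
    cuboidW p τ n l ∈ doublyStochastic ℝ (Fin n) := by
  rw [cuboidW_eq_reindex_piKronecker hn (s := ⟨l % τ, Nat.mod_lt l hτ⟩) rfl]
  exact reindex_mem_doublyStochastic
    (piKronecker_mem_doublyStochastic (mulSingle_Jmat_mem_doublyStochastic _ _))

theorem mprod_cuboidW_eq_Jmat (hτ : 1 ≤ τ) (hn : n = ∏ r ∈ Finset.range τ, p r) {l : ℕ → ℕ}
    {k : ℕ} (hl : Finset.range τ ⊆ (Finset.range k).image fun i => l i % τ) :
    mprod (fun i => cuboidW p τ n (l i)) k = Jmat n := by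
  let position (i : ℕ) : Fin τ := ⟨l i % τ, Nat.mod_lt (l i) hτ⟩
  let factor (i : ℕ) : ∀ r : Fin τ, Matrix (Fin (p r)) (Fin (p r)) ℝ :=
    Pi.mulSingle (position i) (Jmat (p (position i)))
  have factor_prod (r : Fin τ) : mprod (fun i => factor i r) k = Jmat (p r) := by
    obtain ⟨i, hik, hir⟩ := Finset.mem_image.1 (hl (Finset.mem_range.2 r.isLt))
    obtain rfl : position i = r := Fin.ext hir
    exact mprod_eq_Jmat_of_exists_eq_Jmat
      (fun j => mulSingle_Jmat_mem_doublyStochastic _ (position j) _)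
      ⟨i, Finset.mem_range.1 hik, Pi.mulSingle_eq_same _ _⟩
  have cuboidW_eq (i : ℕ) : cuboidW p τ n (l i) =
      reindex (mixedRadixEquiv hn) (mixedRadixEquiv hn) (piKronecker (factor i)) :=
    cuboidW_eq_reindex_piKronecker hn rfl
  simp only [cuboidW_eq, mprod_reindex_piKronecker, factor_prod, reindex_piKronecker_Jmat]

end Cuboid

theorem stmt5_general (τ : ℕ) (hτ : 1 ≤ τ) (p : ℕ → ℕ) (n : ℕ)
    (hn : n = ∏ r ∈ Finset.range τ, p r) :
    (∀ l : ℕ, (cuboidW p τ n l).IsSymm ∧ DoublyStochastic (cuboidW p τ n l)) ∧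
    (∀ (k : ℕ) (l : ℕ → ℕ),
      Finset.range τ ⊆ Finset.image (fun i => l i % τ) (Finset.range k) →
      mprod (fun i => cuboidW p τ n (l i)) k = Jmat n) :=
  ⟨fun l => ⟨cuboidW_isSymm p τ n l,
      doublyStochastic_iff_mem.2 (cuboidW_mem_doublyStochastic hτ hn l)⟩,
    fun _ _ hl => mprod_cuboidW_eq_Jmat hτ hn hl⟩

theorem stmt5 (τ : ℕ) (hτ : 1 ≤ τ) (p : ℕ → ℕ) (hp : ∀ r < τ, Nat.Prime (p r))
    (n : ℕ) (hn : n = ∏ r ∈ Finset.range τ, p r) :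
    (∀ l : ℕ, (cuboidW p τ n l).IsSymm ∧ DoublyStochastic (cuboidW p τ n l)) ∧
    (∀ l : ℕ → ℕ,
      Finset.image (fun i => l i % τ) (Finset.range τ) = Finset.range τ →
      mprod (fun i => cuboidW p τ n (l i)) τ = Jmat n) := by
  have ⟨symm_and_stochastic, consensus⟩ := stmt5_general τ hτ p n hn
  exact ⟨symm_and_stochastic, fun l hl => consensus τ l hl.ge⟩
end

section
/- Let p ≥ 2, τ ≥ 1, n = p^τ, and let W_db ∈ ℝ^{n×n} be the de Bruijn weight matrix, defined by (W_db)_{ij} = 1/p if i mod p^{τ−1} = ⌊j/p⌋ and 0 otherwise (indices 0, …, n−1). Then W_db is doubly stochastic and W_db^τ = (1/n)·11ᵀ; that is, the constant sequence W^(0) = ⋯ = W^(τ−1) = W_db has the finite-time consensus property. -/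
open Matrix

/-- The de Bruijn weight matrix on `n = p^τ` nodes (indices `0, …, n-1`):
`(W_db)_{ij} = 1/p` if `i mod p^{τ-1} = ⌊j/p⌋`, and `0` otherwise. -/
noncomputable def deBruijnW (p τ : ℕ) : Matrix (Fin (p ^ τ)) (Fin (p ^ τ)) ℝ :=
  Matrix.of fun i j => if (i : ℕ) % p ^ (τ - 1) = (j : ℕ) / p then (p : ℝ)⁻¹ else 0

/-!
Writing indices in base `p`, one step of `deBruijnW p τ` forgets the leading digit of `i` and
appends an arbitrary new last digit. For `k ≤ τ`, two indices `i` and `j` are therefore joined by at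
most one `k`-step path, and they are joined exactly when the last `τ - k` digits of `i` are the
first `τ - k` digits of `j`; after `τ` steps this condition is empty, so every entry of the power is
`p⁻¹ ^ τ`.
-/

section Counting

open Finset

theorem card_filter_range_div_eq {n a b c : ℕ} (hn : n = a * b) (hc : c < a) :
    #{j ∈ range n | j / b = c} = b := by
  subst hn
  rcases b.eq_zero_or_pos with rfl | hb
  · simp
  have fiber_eq_Ico : {j ∈ range (a * b) | j / b = c} = Ico (c * b) ((c + 1) * b) := by
    ext j
    have block_le : (c + 1) * b ≤ a * b := Nat.mul_le_mul_right b hc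
    rw [Nat.add_one_mul] at block_le ⊢
    rw [mem_filter, mem_range, mem_Ico, Nat.div_eq_iff hb]
    lia
  rw [fiber_eq_Ico, Nat.card_Ico, Nat.add_one_mul, Nat.add_sub_cancel_left]

theorem card_filter_range_mod_eq {n a b c : ℕ} (hn : n = a * b) (hc : c < b) :
    #{i ∈ range n | i % b = c} = a := by
  subst hn
  have hb : 0 < b := Nat.zero_lt_of_lt hc
  have count_eq := Nat.count_modEq_card (a * b) hb c
  rw [Nat.count_eq_card_filter_range] at count_eq
  simpa [Nat.ModEq, Nat.mod_eq_of_lt hc, hb] using count_eq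

theorem sum_fin_ite_eq_card_mul {R : Type*} [NonAssocSemiring R] (n : ℕ) (P : ℕ → Prop)
    [DecidablePred P] (r : R) :
    (∑ j : Fin n, if P j then r else 0) = #{j ∈ range n | P j} * r := by
  rw [Fin.sum_univ_eq_sum_range (fun j => if P j then r else 0), ← sum_filter, sum_const,
    nsmul_eq_mul]

end Counting

section Digits

variable {p : ℕ}

-- Both sides say that `l / p = a`, `l % p = c % p` and `a % q = c / p`.
theorem div_eq_and_mod_mul_eq_iff (hp : 0 < p) (q a c l : ℕ) :
    a = l / p ∧ l % (p * q) = c ↔ l = p * a + c % p ∧ a % q = c / p := by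
  have div_mul_add : (p * a + c % p) / p = a := by
    rw [Nat.mul_add_div hp, Nat.div_eq_of_lt (Nat.mod_lt c hp), add_zero]
  rw [Nat.ext_div_mod_iff p (l % (p * q)), Nat.ext_div_mod_iff p l, Nat.mod_mul_right_div_self,
    Nat.mod_mul_right_mod, div_mul_add, Nat.mul_add_mod, Nat.mod_mod]
  constructor
  · rintro ⟨rfl, hdiv, hmod⟩
    exact ⟨⟨rfl, hmod⟩, hdiv⟩
  · rintro ⟨⟨rfl, hmod⟩, hdiv⟩
    exact ⟨rfl, hdiv, hmod⟩

theorem mul_mod_pow_add_mod_lt (hp : 0 < p) (t i c : ℕ) :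
    p * (i % p ^ t) + c % p < p ^ (t + 1) := by
  calc p * (i % p ^ t) + c % p < p * (i % p ^ t) + p := by gcongr; exact Nat.mod_lt c hp
    _ = p * (i % p ^ t + 1) := (Nat.mul_add_one _ _).symm
    _ ≤ p * p ^ t := Nat.mul_le_mul_left p (Nat.mod_lt i (pow_pos hp t))
    _ = p ^ (t + 1) := (pow_succ' p t).symm

-- A path of `k + 1` steps from `i` to `j` in the de Bruijn graph has its second vertex `l` forced.
theorem mod_pow_eq_div_and_mod_pow_eq_div_iff (hp : 0 < p) (m k i j l : ℕ) :
    i % p ^ (m + k) = l / p ∧ l % p ^ (m + 1) = j / p ^ k ↔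
      l = p * (i % p ^ (m + k)) + j / p ^ k % p ∧ i % p ^ m = j / p ^ (k + 1) := by
  rw [pow_succ' p m, div_eq_and_mod_mul_eq_iff hp,
    Nat.mod_mod_of_dvd i (pow_dvd_pow p (Nat.le_add_right m k)), Nat.div_div_eq_div_mul,
    ← pow_succ]

end Digits

section DeBruijn

open Finset

variable {p : ℕ}

theorem deBruijnW_nonneg (τ : ℕ) (i j : Fin (p ^ τ)) : 0 ≤ deBruijnW p τ i j := by
  rw [deBruijnW, of_apply]
  positivity

theorem sum_deBruijnW_row (hp : 0 < p) (t : ℕ) (i : Fin (p ^ (t + 1))) :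
    ∑ j, deBruijnW p (t + 1) i j = 1 := by
  have suffix_lt : (i : ℕ) % p ^ t < p ^ t := Nat.mod_lt _ (pow_pos hp t)
  have card_successors : #{j ∈ range (p ^ (t + 1)) | j / p = (i : ℕ) % p ^ t} = p :=
    card_filter_range_div_eq (pow_succ p t) suffix_lt
  simp only [deBruijnW, of_apply, Nat.add_sub_cancel, eq_comm (a := (i : ℕ) % p ^ t)]
  rw [sum_fin_ite_eq_card_mul _ (fun j => j / p = (i : ℕ) % p ^ t), card_successors,
    mul_inv_cancel₀ (Nat.cast_ne_zero.2 hp.ne')]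

theorem sum_deBruijnW_col (hp : 0 < p) (t : ℕ) (j : Fin (p ^ (t + 1))) :
    ∑ i, deBruijnW p (t + 1) i j = 1 := by
  have prefix_lt : (j : ℕ) / p < p ^ t := Nat.div_lt_of_lt_mul (pow_succ' p t ▸ j.isLt)
  have card_predecessors : #{i ∈ range (p ^ (t + 1)) | i % p ^ t = (j : ℕ) / p} = p :=
    card_filter_range_mod_eq (pow_succ' p t) prefix_lt
  simp only [deBruijnW, of_apply, Nat.add_sub_cancel]
  rw [sum_fin_ite_eq_card_mul _ (fun i => i % p ^ t = (j : ℕ) / p), card_predecessors,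
    mul_inv_cancel₀ (Nat.cast_ne_zero.2 hp.ne')]

theorem deBruijnW_doublyStochastic (hp : 0 < p) (t : ℕ) :
    DoublyStochastic (deBruijnW p (t + 1)) :=
  ⟨deBruijnW_nonneg (t + 1), sum_deBruijnW_row hp t, sum_deBruijnW_col hp t⟩

theorem deBruijnW_pow_apply (hp : 0 < p) {τ k : ℕ} (hk : k ≤ τ) (i j : Fin (p ^ τ)) :
    (deBruijnW p τ ^ k) i j =
      if (i : ℕ) % p ^ (τ - k) = (j : ℕ) / p ^ k then (p : ℝ)⁻¹ ^ k else 0 := by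
  induction k generalizing i with
  | zero => simp [one_apply, Nat.mod_eq_of_lt i.isLt, Fin.ext_iff]
  | succ k ih =>
    obtain ⟨m, rfl⟩ : ∃ m, τ = m + k + 1 := ⟨τ - (k + 1), by lia⟩
    let mid : Fin (p ^ (m + k + 1)) := ⟨_, mul_mod_pow_add_mod_lt hp (m + k) i (j / p ^ k)⟩
    have summand_eq (l : Fin (p ^ (m + k + 1))) :
        deBruijnW p (m + k + 1) i l * (deBruijnW p (m + k + 1) ^ k) l j =
          if l = mid then
            if (i : ℕ) % p ^ m = (j : ℕ) / p ^ (k + 1) then (p : ℝ)⁻¹ ^ (k + 1) else 0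
          else 0 := by
      rw [ih (by lia), deBruijnW, of_apply, show m + k + 1 - k = m + 1 by lia,
        Nat.add_sub_cancel, ite_zero_mul_ite_zero, ← ite_and, ← pow_succ']
      simp only [mod_pow_eq_div_and_mod_pow_eq_div_iff hp, mid, Fin.ext_iff]
    rw [pow_succ', mul_apply, sum_congr rfl fun l _ => summand_eq l, Fintype.sum_ite_eq',
      show m + k + 1 - (k + 1) = m by lia]

theorem deBruijnW_pow_self (hp : 0 < p) (τ : ℕ) : deBruijnW p τ ^ τ = Jmat (p ^ τ) := by
  ext i j
  have no_digits_left : (i : ℕ) % p ^ (τ - τ) = (j : ℕ) / p ^ τ := by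
    rw [Nat.sub_self, pow_zero, Nat.mod_one, Nat.div_eq_of_lt j.isLt]
  rw [deBruijnW_pow_apply hp le_rfl, if_pos no_digits_left, Jmat, of_apply, Nat.cast_pow, inv_pow]

end DeBruijn

theorem stmt10 (p τ : ℕ) (hp : 2 ≤ p) (hτ : 1 ≤ τ) :
    DoublyStochastic (deBruijnW p τ) ∧ deBruijnW p τ ^ τ = Jmat (p ^ τ) := by
  have hp0 : 0 < p := by lia
  obtain ⟨t, rfl⟩ : ∃ t, τ = t + 1 := Nat.exists_eq_add_of_le' hτ
  exact ⟨deBruijnW_doublyStochastic hp0 t, deBruijnW_pow_self hp0 (t + 1)⟩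
end

section
/- Let α ∈ ℝ, let W^(0), W^(1), W^(2), … be real N×N matrices, and let u^(0), u^(1), … ∈ ℝ^N be arbitrary vectors with the convention u^(−1) = 0. Suppose the sequences x^(k), g^(k) ∈ ℝ^N satisfy g^(0) = u^(0) and, for all k ≥ 0, x^(k+1) = W^(k)(x^(k) − α g^(k)) and g^(k+1) = W^(k) g^(k) + u^(k+1) − u^(k). Then for all k ≥ 1: x^(k) = (W^(k−1) W^(k−2) ⋯ W^(0)) x^(0) − α ∑_{j=0}^{k−1} (k−j) (W^(k−1) W^(k−2) ⋯ W^(j)) (u^(j) − u^(j−1)). -/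
open Matrix

/-- Ordered product from index `j` upwards: `mprodFrom W j c = W^(j+c) ⋯ W^(j+1) W^(j)`. -/
def mprodFrom {I : Type*} [Fintype I] (W : ℕ → Matrix I I ℝ) (j : ℕ) :
    ℕ → Matrix I I ℝ
  | 0 => W j
  | c + 1 => W (j + c + 1) * mprodFrom W j c

section

variable {I : Type*} [Fintype I] (W : ℕ → Matrix I I ℝ)

theorem mprodFrom_succ_sub {j k : ℕ} (hjk : j ≤ k) :
    mprodFrom W j (k + 1 - j) = W (k + 1) * mprodFrom W j (k - j) := by
  obtain ⟨c, rfl⟩ := Nat.exists_eq_add_of_le hjk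
  rw [Nat.add_assoc, Nat.add_sub_cancel_left, Nat.add_sub_cancel_left]
  rfl

theorem mulVec_sum_mprodFrom_mulVec (v : ℕ → I → ℝ) (k : ℕ) :
    W (k + 1) *ᵥ (∑ j ∈ Finset.range (k + 1), mprodFrom W j (k - j) *ᵥ v j) =
      ∑ j ∈ Finset.range (k + 1), mprodFrom W j (k + 1 - j) *ᵥ v j := by
  rw [mulVec_sum]
  refine Finset.sum_congr rfl fun j hj ↦ ?_
  rw [mprodFrom_succ_sub W (Finset.mem_range_succ_iff.mp hj), mulVec_mulVec]

theorem mulVec_tracker_eq_sum {d g : ℕ → I → ℝ} (hg0 : g 0 = d 0)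
    (hg : ∀ k, g (k + 1) = W k *ᵥ g k + d (k + 1)) (k : ℕ) :
    W k *ᵥ g k = ∑ j ∈ Finset.range (k + 1), mprodFrom W j (k - j) *ᵥ d j := by
  induction k with
  | zero => simp [hg0, mprodFrom]
  | succ k ih =>
    rw [hg, mulVec_add, ih, mulVec_sum_mprodFrom_mulVec, Finset.sum_range_succ _ (k + 1),
      Nat.sub_self, mprodFrom]

/-- Source of the weights `k - j`: every step feeds the whole tracking variable into the iterate,
so each increment seen so far gains one unit of weight. -/
theorem sum_smul_mprodFrom_mulVec_succ (d : ℕ → I → ℝ) (k : ℕ) :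
    ∑ j ∈ Finset.range (k + 2), ((k + 2 - j : ℕ) : ℝ) • (mprodFrom W j (k + 1 - j) *ᵥ d j) =
      W (k + 1) *ᵥ (∑ j ∈ Finset.range (k + 1),
        ((k + 1 - j : ℕ) : ℝ) • (mprodFrom W j (k - j) *ᵥ d j)) +
      ∑ j ∈ Finset.range (k + 2), mprodFrom W j (k + 1 - j) *ᵥ d j := by
  have weight_succ : ∀ j ∈ Finset.range (k + 2),
      ((k + 2 - j : ℕ) : ℝ) = ((k + 1 - j : ℕ) : ℝ) + 1 := fun j hj ↦ by
    rw [Nat.succ_sub (Finset.mem_range_succ_iff.mp hj), Nat.cast_succ]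
  have propagate : W (k + 1) *ᵥ (∑ j ∈ Finset.range (k + 1),
        ((k + 1 - j : ℕ) : ℝ) • (mprodFrom W j (k - j) *ᵥ d j)) =
      ∑ j ∈ Finset.range (k + 2),
        ((k + 1 - j : ℕ) : ℝ) • (mprodFrom W j (k + 1 - j) *ᵥ d j) := by
    simp only [← mulVec_smul, mulVec_sum_mprodFrom_mulVec]
    simp [Finset.sum_range_succ _ (k + 1)]
  rw [propagate, ← Finset.sum_add_distrib]
  refine Finset.sum_congr rfl fun j hj ↦ ?_
  rw [weight_succ j hj, add_smul, one_smul]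

theorem gradientTracking_iterate_succ {α : ℝ} {d x g : ℕ → I → ℝ} (hg0 : g 0 = d 0)
    (hx : ∀ k, x (k + 1) = W k *ᵥ (x k - α • g k))
    (hg : ∀ k, g (k + 1) = W k *ᵥ g k + d (k + 1)) (k : ℕ) :
    x (k + 1) = mprodFrom W 0 k *ᵥ x 0 -
      α • ∑ j ∈ Finset.range (k + 1),
        ((k + 1 - j : ℕ) : ℝ) • (mprodFrom W j (k - j) *ᵥ d j) := by
  induction k with
  | zero => simp [hx, hg0, mprodFrom, mulVec_sub, mulVec_smul]
  | succ k ih =>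
    have head_succ : W (k + 1) *ᵥ (mprodFrom W 0 k *ᵥ x 0) = mprodFrom W 0 (k + 1) *ᵥ x 0 := by
      rw [mulVec_mulVec, mprodFrom, Nat.zero_add]
    rw [hx, mulVec_sub, mulVec_smul, mulVec_tracker_eq_sum W hg0 hg, ih, mulVec_sub, mulVec_smul,
      head_succ, sub_sub, ← smul_add, ← sum_smul_mprodFrom_mulVec_succ]

end

/-- Closed-form single-line recursion for the Gradient Tracking iterates. -/
theorem stmt13 (N : ℕ) (α : ℝ) (W : ℕ → Matrix (Fin N) (Fin N) ℝ)
    (u x g : ℕ → Fin N → ℝ)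
    (hg0 : g 0 = u 0)
    (hx : ∀ k, x (k + 1) = W k *ᵥ (x k - α • g k))
    (hg : ∀ k, g (k + 1) = W k *ᵥ g k + u (k + 1) - u k) :
    ∀ k, 1 ≤ k →
      x k = mprodFrom W 0 (k - 1) *ᵥ x 0 -
        α • ∑ j ∈ Finset.range k,
          ((k - j : ℕ) : ℝ) •
            (mprodFrom W j (k - 1 - j) *ᵥ (u j - if j = 0 then 0 else u (j - 1))) := by
  intro k hk
  obtain ⟨k, rfl⟩ := Nat.exists_eq_add_of_le' hk
  let d : ℕ → Fin N → ℝ := fun j ↦ u j - if j = 0 then 0 else u (j - 1)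
  have hd0 : g 0 = d 0 := by simp [d, hg0]
  have hd : ∀ k, g (k + 1) = W k *ᵥ g k + d (k + 1) := fun k ↦ by simp [d, hg, add_sub_assoc]
  exact gradientTracking_iterate_succ W hd0 hx hd k
end
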